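/- Suppose r > 0 and 0 < |u₀| < r are sufficiently small that T_u maps B̄_r(u) into itself. Then T_u is continuously Fréchet differentiable on the open ball B_r(u) = {v ∈ 𝕍 : ‖v − u‖ < r}, and its Fréchet derivative at v ∈ B_r(u) is the bounded linear operator on 𝕍 given by (D(T_u)_v h)(t) = −∫_t^∞ Φ(t,s)·Db(v(s))·h(s) ds, where Db denotes the Jacobian matrix of b : ℝ⁴ → ℝ⁴. -/

import Mathlib

open Filter Topology MeasureTheory

/-- `A₂ = d(d+2)`. -/
noncomputable def A2 (d : ℕ) : ℝ := (d : ℝ) * ((d : ℝ) + 2)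

/-- `A₃ = (1/4)·d·(d+2)²·q²`. -/
noncomputable def A3 (d : ℕ) (q : ℝ) : ℝ := (1/4) * (d : ℝ) * ((d : ℝ) + 2)^2 * q^2

/-- The fundamental matrix `Φ(t,s)` of the linear system. -/
noncomputable def Phi (d : ℕ) (t s : ℝ) : Matrix (Fin 4) (Fin 4) ℝ :=
  !![1, (A2 d / (2 * (d : ℝ))) * (Real.exp (-2*(t-s)) - 1), 0, 0;
     0, Real.exp (-2*(t-s)), 0, 0;
     0, 0, Real.exp (-2*(t-s)), 0;
     0, 0, 0, Real.exp (-2*(t-s))]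

/-- The nonlinearity `b : ℝ⁴ → ℝ⁴`. -/
noncomputable def bfun (d : ℕ) (q : ℝ) (v : Fin 4 → ℝ) : Fin 4 → ℝ :=
  ![ -(v 0) * ((d : ℝ) * (v 0)^2 + (v 2)^2 - 2 * v 2) + (2 * A3 d q / (d : ℝ)) * (v 3)^2,
     -2 * v 1 * ((d : ℝ) * (v 0)^2 - v 0 + (v 2)^2 - 2 * v 2),
     -(v 2) * ((d : ℝ) * (v 0)^2 + (v 2)^2 - 3 * v 2) + (d : ℝ) * (v 0)^2 + A3 d q * (v 3)^2,
     -(v 3) * ((d : ℝ) * (v 0)^2 - 2 * v 0 + (v 2)^2 - 3 * v 2) ]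

/-- The nonlinear integral operator `T_u v(t) = u(t) - ∫_t^∞ Φ(t,s) b(v(s)) ds`. -/
noncomputable def Tmap (d : ℕ) (q : ℝ) (u v : ℝ → Fin 4 → ℝ) : ℝ → Fin 4 → ℝ :=
  fun t => u t - ∫ s in Set.Ioi t, (Phi d t s).mulVec (bfun d q (v s))

/-- Membership in the Banach space `𝕍`: continuity on `[0,∞)` and finiteness of the
weighted sup norm `sup_{t ≥ 0} e^{2t}|v(t)|`. -/
def memV (v : ℝ → Fin 4 → ℝ) : Prop :=
  ContinuousOn v (Set.Ici 0) ∧ ∃ M : ℝ, ∀ t ≥ (0:ℝ), Real.exp (2*t) * ‖v t‖ ≤ M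

/-- The weighted sup norm `‖v‖ = sup_{t ≥ 0} e^{2t}|v(t)|`. -/
noncomputable def Vnorm (v : ℝ → Fin 4 → ℝ) : ℝ :=
  ⨆ t : Set.Ici (0:ℝ), Real.exp (2 * (t : ℝ)) * ‖v (t : ℝ)‖

/-- Membership in the closed ball `B̄_r(u) = {v ∈ 𝕍 : ‖v - u‖ ≤ r}`. -/
def inBall (r : ℝ) (u v : ℝ → Fin 4 → ℝ) : Prop :=
  memV v ∧ ∀ t ≥ (0:ℝ), Real.exp (2*t) * ‖v t - u t‖ ≤ r

/-- The initial vector `u₀ = ((A₂/(2d))y₀, y₀, z₀, w₀)`. -/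
noncomputable def uZero (d : ℕ) (y0 z0 w0 : ℝ) : Fin 4 → ℝ :=
  ![A2 d / (2 * (d : ℝ)) * y0, y0, z0, w0]

/-- The solution `u(t) = Φ(t,0)u₀ = e^{-2t} u₀` of the linear system. -/
noncomputable def ufun (d : ℕ) (y0 z0 w0 : ℝ) : ℝ → Fin 4 → ℝ :=
  fun t => Real.exp (-2*t) • uZero d y0 z0 w0

/-- An (entrywise sup) norm on 4×4 matrices. -/
noncomputable def matNorm (M : Matrix (Fin 4) (Fin 4) ℝ) : ℝ := ⨆ i, ⨆ j, |M i j|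

/-- The Jacobian matrix `Db` of `b : ℝ⁴ → ℝ⁴`. -/
noncomputable def Db (d : ℕ) (q : ℝ) (x : Fin 4 → ℝ) : Matrix (Fin 4) (Fin 4) ℝ :=
  Matrix.of fun i j => fderiv ℝ (fun y => bfun d q y i) x (Pi.single j 1)

/-- The candidate derivative `h ↦ (t ↦ −∫_t^∞ Φ(t,s)·Db(v(s))·h(s) ds)` of `T_u` at `v`. -/
noncomputable def Lop (d : ℕ) (q : ℝ) (v h : ℝ → Fin 4 → ℝ) : ℝ → Fin 4 → ℝ :=
  fun t => -∫ s in Set.Ioi t, (Phi d t s).mulVec ((Db d q (v s)).mulVec (h s))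

section Nonlinearity

variable (d : ℕ) (q : ℝ)

lemma contDiff_bfun : ContDiff ℝ 2 (bfun d q) := by
  rw [contDiff_pi]
  intro i
  fin_cases i <;> simp only [bfun] <;> simp <;> fun_prop

lemma differentiable_bfun : Differentiable ℝ (bfun d q) :=
  (contDiff_bfun d q).differentiable (by norm_num)

lemma continuous_fderiv_bfun : Continuous (fderiv ℝ (bfun d q)) :=
  (contDiff_bfun d q).continuous_fderiv (by norm_num)

lemma Db_mulVec (x h : Fin 4 → ℝ) : (Db d q x).mulVec h = fderiv ℝ (bfun d q) x h := by
  have key : ∀ i j, Db d q x i j = fderiv ℝ (bfun d q) x (Pi.single j 1) i := by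
    intro i j
    simp only [Db, Matrix.of_apply]
    rw [fderiv_apply (differentiable_bfun d q x) i]
    rfl
  conv_rhs => rw [pi_eq_sum_univ' h]
  ext i
  simp only [Matrix.mulVec, dotProduct, key, map_sum, map_smul, Finset.sum_apply, Pi.smul_apply,
    smul_eq_mul]
  refine Finset.sum_congr rfl fun j _ => ?_
  rw [mul_comm]

lemma bfun_zero : bfun d q 0 = 0 := by
  ext i
  fin_cases i <;> simp [bfun]

lemma bfun_smul_apply (x : Fin 4 → ℝ) (i : Fin 4) :
    ∃ α β : ℝ, ∀ t : ℝ, bfun d q (t • x) i = t ^ 2 * α + t ^ 3 * β := by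
  fin_cases i
  · refine ⟨2 * x 0 * x 2 + 2 * A3 d q / d * x 3 ^ 2, -x 0 * (d * x 0 ^ 2 + x 2 ^ 2), fun t => ?_⟩
    simp [bfun]; ring
  · refine ⟨2 * x 1 * (x 0 + 2 * x 2), -2 * x 1 * (d * x 0 ^ 2 + x 2 ^ 2), fun t => ?_⟩
    simp [bfun]; ring
  · refine ⟨3 * x 2 ^ 2 + d * x 0 ^ 2 + A3 d q * x 3 ^ 2, -x 2 * (d * x 0 ^ 2 + x 2 ^ 2),
      fun t => ?_⟩
    simp [bfun]; ring
  · refine ⟨x 3 * (2 * x 0 + 3 * x 2), -x 3 * (d * x 0 ^ 2 + x 2 ^ 2), fun t => ?_⟩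
    simp [bfun]; ring

lemma fderiv_bfun_zero : fderiv ℝ (bfun d q) 0 = 0 := by
  ext1 x
  ext i
  obtain ⟨α, β, h⟩ := bfun_smul_apply d q x i
  have h1 : HasDerivAt (fun t : ℝ => bfun d q (t • x) i) 0 0 := by
    have : HasDerivAt (fun t : ℝ => t ^ 2 * α + t ^ 3 * β) 0 0 := by
      simpa using ((hasDerivAt_pow 2 (0 : ℝ)).mul_const α).fun_add
        ((hasDerivAt_pow 3 (0 : ℝ)).mul_const β)
    simpa only [h] using this
  have h2 : HasDerivAt (fun t : ℝ => bfun d q (t • x)) (fderiv ℝ (bfun d q) 0 x) 0 := by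
    have h3 : HasDerivAt (fun t : ℝ => t • x) x 0 := by
      simpa using (hasDerivAt_id (0 : ℝ)).smul_const x
    have h4 : HasFDerivAt (bfun d q) (fderiv ℝ (bfun d q) 0) ((0 : ℝ) • x) := by
      rw [zero_smul]; exact (differentiable_bfun d q 0).hasFDerivAt
    exact h4.comp_hasDerivAt 0 h3
  exact (hasDerivAt_pi.1 h2 i).unique h1

/-- On bounded sets the derivative of `bfun` is Lipschitz, with the resulting bounds. -/
lemma exists_bfun_bounds (R : ℝ) : ∃ K : ℝ, 0 ≤ K ∧
    (∀ x y h, ‖x‖ ≤ R → ‖y‖ ≤ R →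
      ‖fderiv ℝ (bfun d q) y h - fderiv ℝ (bfun d q) x h‖ ≤ K * ‖y - x‖ * ‖h‖) ∧
    (∀ x h, ‖x‖ ≤ R → ‖fderiv ℝ (bfun d q) x h‖ ≤ K * ‖x‖ * ‖h‖) ∧
    (∀ x h, ‖x‖ ≤ R → ‖x + h‖ ≤ R →
      ‖bfun d q (x + h) - bfun d q x - fderiv ℝ (bfun d q) x h‖ ≤ K * ‖h‖ * ‖h‖) ∧
    (∀ x, ‖x‖ ≤ R → ‖bfun d q x‖ ≤ K * ‖x‖ * ‖x‖) := by
  have hc : ContDiff ℝ 1 (fderiv ℝ (bfun d q)) :=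
    (contDiff_bfun d q).fderiv_right (by norm_num)
  obtain ⟨K, hK⟩ := hc.contDiffOn.exists_lipschitzOnWith (by norm_num)
    (convex_closedBall (0 : Fin 4 → ℝ) R) (isCompact_closedBall (0 : Fin 4 → ℝ) R)
  have hL : ∀ x y, ‖x‖ ≤ R → ‖y‖ ≤ R →
      ‖fderiv ℝ (bfun d q) y - fderiv ℝ (bfun d q) x‖ ≤ K * ‖y - x‖ := fun x y hx hy => by
    simpa [dist_eq_norm] using hK.dist_le_mul y (by simpa using hy) x (by simpa using hx)
  have h1 : ∀ x y h, ‖x‖ ≤ R → ‖y‖ ≤ R →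
      ‖fderiv ℝ (bfun d q) y h - fderiv ℝ (bfun d q) x h‖ ≤ K * ‖y - x‖ * ‖h‖ :=
    fun x y h hx hy => ((fderiv ℝ (bfun d q) y - fderiv ℝ (bfun d q) x).le_of_opNorm_le
      (hL x y hx hy) h)
  have h3 : ∀ x h, ‖x‖ ≤ R → ‖x + h‖ ≤ R →
      ‖bfun d q (x + h) - bfun d q x - fderiv ℝ (bfun d q) x h‖ ≤ K * ‖h‖ * ‖h‖ := by
    intro x h hx hxh
    have hseg : segment ℝ x (x + h) ⊆ Metric.closedBall 0 R :=
      (convex_closedBall (0 : Fin 4 → ℝ) R).segment_subset (by simpa using hx) (by simpa using hxh)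
    have := (convex_segment x (x + h)).norm_image_sub_le_of_norm_fderiv_le' (𝕜 := ℝ)
      (f := bfun d q) (φ := fderiv ℝ (bfun d q) x) (C := K * ‖h‖)
      (fun z _ => differentiable_bfun d q z) (fun z hz => ?_)
      (left_mem_segment ℝ _ _) (right_mem_segment ℝ _ _)
    · simpa using this
    · refine (hL x z hx (by simpa using hseg hz)).trans ?_
      gcongr
      simpa using norm_sub_le_of_mem_segment hz
  refine ⟨K, K.2, h1, fun x h hx => ?_, h3, fun x hx => ?_⟩
  · have hR : ‖(0 : Fin 4 → ℝ)‖ ≤ R := by simpa using (norm_nonneg x).trans hx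
    simpa [fderiv_bfun_zero] using h1 0 x h hR hx
  · have hR : ‖(0 : Fin 4 → ℝ)‖ ≤ R := by simpa using (norm_nonneg x).trans hx
    simpa [fderiv_bfun_zero, bfun_zero] using h3 0 x hR (by simpa using hx)

end Nonlinearity

section WeightedSpace

lemma memV.bddAbove {v : ℝ → Fin 4 → ℝ} (hv : memV v) :
    BddAbove (Set.range fun t : Set.Ici (0:ℝ) => Real.exp (2 * (t : ℝ)) * ‖v (t : ℝ)‖) := by
  obtain ⟨M, hM⟩ := hv.2
  exact ⟨M, by rintro _ ⟨t, rfl⟩; exact hM t t.2⟩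

lemma memV.le_Vnorm {v : ℝ → Fin 4 → ℝ} (hv : memV v) {t : ℝ} (ht : 0 ≤ t) :
    Real.exp (2 * t) * ‖v t‖ ≤ Vnorm v :=
  le_ciSup hv.bddAbove (⟨t, ht⟩ : Set.Ici (0:ℝ))

lemma Vnorm_nonneg (v : ℝ → Fin 4 → ℝ) : 0 ≤ Vnorm v :=
  Real.iSup_nonneg fun _ => by positivity

lemma memV.norm_le {v : ℝ → Fin 4 → ℝ} (hv : memV v) {t : ℝ} (ht : 0 ≤ t) :
    ‖v t‖ ≤ Vnorm v :=
  (le_mul_of_one_le_left (norm_nonneg _) (Real.one_le_exp (by linarith))).trans (hv.le_Vnorm ht)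

lemma memV.add {v w : ℝ → Fin 4 → ℝ} (hv : memV v) (hw : memV w) : memV (v + w) := by
  refine ⟨hv.1.add hw.1, Vnorm v + Vnorm w, fun t ht => ?_⟩
  calc Real.exp (2 * t) * ‖v t + w t‖ ≤ Real.exp (2 * t) * (‖v t‖ + ‖w t‖) := by
        gcongr; exact norm_add_le _ _
    _ ≤ _ := by rw [mul_add]; exact add_le_add (hv.le_Vnorm ht) (hw.le_Vnorm ht)

lemma memV.smul {v : ℝ → Fin 4 → ℝ} (hv : memV v) (c : ℝ) : memV (c • v) := by
  refine ⟨hv.1.const_smul c, |c| * Vnorm v, fun t ht => ?_⟩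
  rw [Pi.smul_apply, norm_smul, Real.norm_eq_abs, mul_left_comm]
  gcongr
  exact hv.le_Vnorm ht

lemma memV.sub {v w : ℝ → Fin 4 → ℝ} (hv : memV v) (hw : memV w) : memV (v - w) := by
  have h := hv.add (hw.smul (-1))
  rwa [neg_one_smul, ← sub_eq_add_neg] at h

/-- Products of two elements of the weighted space decay at twice the rate. -/
lemma memV.exp_mul_norm_mul_norm_le {v w : ℝ → Fin 4 → ℝ} (hv : memV v) (hw : memV w) {t : ℝ}
    (ht : 0 ≤ t) : Real.exp (4 * t) * (‖v t‖ * ‖w t‖) ≤ Vnorm v * Vnorm w := by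
  have h : Real.exp (4 * t) = Real.exp (2 * t) * Real.exp (2 * t) := by
    rw [← Real.exp_add]; ring_nf
  calc _ = (Real.exp (2 * t) * ‖v t‖) * (Real.exp (2 * t) * ‖w t‖) := by rw [h]; ring
    _ ≤ _ := mul_le_mul (hv.le_Vnorm ht) (hw.le_Vnorm ht) (by positivity) (Vnorm_nonneg v)

end WeightedSpace

section Integral

/-- Continuity on `[0,∞)` together with the bound `|g(s)| ≤ K e^{-4s}`. -/
def QuadDecay (K : ℝ) (g : ℝ → Fin 4 → ℝ) : Prop :=
  ContinuousOn g (Set.Ici 0) ∧ ∀ s ≥ (0:ℝ), Real.exp (4 * s) * ‖g s‖ ≤ K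

lemma continuousOn_integral_Ioi {E : Type*} [NormedAddCommGroup E] [NormedSpace ℝ E]
    {f : ℝ → E} {a : ℝ} (hf : IntegrableOn f (Set.Ioi a)) :
    ContinuousOn (fun t => ∫ s in Set.Ioi t, f s) (Set.Ici a) := by
  have hg : Integrable ((Set.Ioi a).indicator f) := hf.integrable_indicator measurableSet_Ioi
  have hc : Continuous fun t => ∫ s in a..t, (Set.Ioi a).indicator f s :=
    intervalIntegral.continuous_primitive (fun _ _ => hg.intervalIntegrable) a
  refine (continuousOn_const (c := ∫ s in Set.Ioi a, f s)).sub hc.continuousOn |>.congr ?_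
  intro t ht
  have h1 : ∫ s in a..t, (Set.Ioi a).indicator f s = ∫ s in a..t, f s := by
    rw [intervalIntegral.integral_of_le ht, intervalIntegral.integral_of_le ht]
    exact setIntegral_congr_fun measurableSet_Ioc fun s hs => Set.indicator_of_mem hs.1 f
  simp only [Pi.sub_apply]
  rw [h1, ← intervalIntegral.integral_interval_add_Ioi hf
    (hf.mono_set (Set.Ioi_subset_Ioi ht)), add_sub_cancel_left]

lemma integrableOn_of_exp_decay {E : Type*} [NormedAddCommGroup E] {f : ℝ → E} {K t : ℝ}
    (ht : 0 ≤ t) (hf : ContinuousOn f (Set.Ici 0))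
    (hK : ∀ s ≥ t, ‖f s‖ ≤ K * Real.exp (-2 * s)) : IntegrableOn f (Set.Ioi t) := by
  refine Integrable.mono' ((integrableOn_exp_mul_Ioi (a := -2) (by norm_num) t).const_mul K) ?_ ?_
  · exact (hf.mono fun s hs => ht.trans (le_of_lt hs)).aestronglyMeasurable measurableSet_Ioi
  · exact (ae_restrict_mem measurableSet_Ioi).mono fun s hs => hK s (le_of_lt hs)

lemma QuadDecay.norm_le {K : ℝ} {g : ℝ → Fin 4 → ℝ} (hg : QuadDecay K g) {s : ℝ} (hs : 0 ≤ s) :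
    ‖g s‖ ≤ K * Real.exp (-4 * s) := by
  have := hg.2 s hs
  rw [neg_mul, Real.exp_neg, ← div_eq_mul_inv, le_div_iff₀ (Real.exp_pos _)]
  linarith

lemma Phi_mulVec (d : ℕ) (t s : ℝ) (w : Fin 4 → ℝ) :
    (Phi d t s).mulVec w = ![w 0 - A2 d / (2 * d) * w 1, 0, 0, 0] +
      Real.exp (-2 * t) • Real.exp (2 * s) • ![A2 d / (2 * d) * w 1, w 1, w 2, w 3] := by
  have h : Real.exp (-2 * (t - s)) = Real.exp (-2 * t) * Real.exp (2 * s) := by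
    rw [← Real.exp_add]; ring_nf
  ext i
  fin_cases i <;> simp only [Phi, h] <;>
    simp [Matrix.mulVec, dotProduct, Fin.sum_univ_four] <;> ring

variable (d : ℕ)

lemma norm_Phi_mulVec_le {t s : ℝ} (hts : t ≤ s) (w : Fin 4 → ℝ) :
    ‖(Phi d t s).mulVec w‖ ≤
      (1 + |A2 d / (2 * d)|) * Real.exp (2 * (s - t)) * ‖w‖ := by
  set a := A2 d / (2 * (d : ℝ)) with ha
  have he : 1 ≤ Real.exp (2 * (s - t)) := Real.one_le_exp (by linarith)
  have he' : Real.exp (-2 * (t - s)) = Real.exp (2 * (s - t)) := by ring_nf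
  set e := Real.exp (2 * (s - t))
  have hw : ∀ i, |w i| ≤ ‖w‖ := fun i => norm_le_pi_norm w i
  have hn : 0 ≤ ‖w‖ := norm_nonneg w
  have hdiag : ∀ i, |e * w i| ≤ (1 + |a|) * e * ‖w‖ := fun i => by
    rw [abs_mul, abs_of_pos (by linarith : 0 < e)]
    have h1 : e * |w i| ≤ e * ‖w‖ := by gcongr; exact hw i
    have h2 : 0 ≤ |a| * (e * ‖w‖) := by positivity
    nlinarith
  refine (pi_norm_le_iff_of_nonneg (by positivity)).2 fun i => ?_
  rw [Real.norm_eq_abs]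
  fin_cases i
  · have h0 : (Phi d t s).mulVec w 0 = w 0 + a * (e - 1) * w 1 := by
      simp [Phi, Matrix.mulVec, dotProduct, Fin.sum_univ_four, ha, ← he']
    simp only [Fin.zero_eta, h0]
    refine (abs_add_le _ _).trans ?_
    rw [abs_mul, abs_mul, abs_of_nonneg (by linarith : 0 ≤ e - 1)]
    have h1 : |a| * (e - 1) * |w 1| ≤ |a| * e * ‖w‖ := by
      gcongr
      · linarith
      · exact hw 1
    have h2 : |w 0| ≤ e * ‖w‖ := (hw 0).trans (le_mul_of_one_le_left hn he)
    linarith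
  all_goals
    simpa [Phi, Matrix.mulVec, dotProduct, Fin.sum_univ_four, ← he'] using hdiag _

variable {d} {K : ℝ} {g : ℝ → Fin 4 → ℝ}

lemma continuousOn_Phi_mulVec_comp (hg : ContinuousOn g (Set.Ici 0)) (t : ℝ) :
    ContinuousOn (fun s => (Phi d t s).mulVec (g s)) (Set.Ici 0) := by
  have hgi := continuousOn_pi.1 hg
  simp only [Phi_mulVec]
  refine ContinuousOn.fun_add ?_ (ContinuousOn.fun_const_smul (ContinuousOn.fun_smul
    (s := Set.Ici 0) (f := fun s : ℝ => Real.exp (2 * s)) (by fun_prop) ?_) _)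
  all_goals
    refine continuousOn_pi.2 fun i => ?_
    fin_cases i <;> simp <;> fun_prop

lemma QuadDecay.norm_Phi_mulVec_le (hg : QuadDecay K g) {t s : ℝ} (ht : 0 ≤ t) (hts : t ≤ s) :
    ‖(Phi d t s).mulVec (g s)‖ ≤
      (1 + |A2 d / (2 * d)|) * K * Real.exp (-2 * t) * Real.exp (-2 * s) := by
  refine (_root_.norm_Phi_mulVec_le d hts _).trans ?_
  have h : Real.exp (-2 * t) * Real.exp (-2 * s) =
      Real.exp (2 * (s - t)) * Real.exp (-4 * s) := by
    rw [← Real.exp_add, ← Real.exp_add]; ring_nf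
  calc _ ≤ (1 + |A2 d / (2 * d)|) * Real.exp (2 * (s - t)) * (K * Real.exp (-4 * s)) := by
        gcongr; exact hg.norm_le (ht.trans hts)
    _ = _ := by rw [mul_assoc _ (Real.exp (-2 * t)), h]; ring

lemma QuadDecay.integrableOn (hg : QuadDecay K g) {t : ℝ} (ht : 0 ≤ t) :
    IntegrableOn (fun s => (Phi d t s).mulVec (g s)) (Set.Ioi t) :=
  integrableOn_of_exp_decay ht (continuousOn_Phi_mulVec_comp hg.1 t)
    fun _ hs => hg.norm_Phi_mulVec_le ht hs

lemma QuadDecay.norm_integral_le (hg : QuadDecay K g) {t : ℝ} (ht : 0 ≤ t) :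
    Real.exp (2 * t) * ‖∫ s in Set.Ioi t, (Phi d t s).mulVec (g s)‖ ≤
      (1 + |A2 d / (2 * d)|) * K := by
  have hK : 0 ≤ K := (by positivity : 0 ≤ Real.exp (4 * 0) * ‖g 0‖).trans (hg.2 0 le_rfl)
  set C := (1 + |A2 d / (2 * d)|)
  have hC : 0 ≤ C := by positivity
  have h1 : ‖∫ s in Set.Ioi t, (Phi d t s).mulVec (g s)‖ ≤
      ∫ s in Set.Ioi t, C * K * Real.exp (-2 * t) * Real.exp (-2 * s) :=
    norm_integral_le_of_norm_le
      ((integrableOn_exp_mul_Ioi (a := -2) (by norm_num) t).const_mul _)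
      ((ae_restrict_mem measurableSet_Ioi).mono fun s hs =>
        hg.norm_Phi_mulVec_le ht (le_of_lt hs))
  rw [integral_const_mul, integral_exp_mul_Ioi (by norm_num)] at h1
  have he : Real.exp (2 * t) * Real.exp (-2 * t) = 1 := by rw [← Real.exp_add]; simp
  have he' : Real.exp (-2 * t) ≤ 1 := Real.exp_le_one_iff.2 (by linarith)
  calc _ ≤ Real.exp (2 * t) * (C * K * Real.exp (-2 * t) * (-Real.exp (-2 * t) / -2)) := by gcongr
    _ = (Real.exp (2 * t) * Real.exp (-2 * t)) * (C * K * (Real.exp (-2 * t) / 2)) := by ring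
    _ = C * K * (Real.exp (-2 * t) / 2) := by rw [he, one_mul]
    _ ≤ C * K * 1 := by gcongr; linarith
    _ = _ := mul_one _

lemma QuadDecay.memV_integral (hg : QuadDecay K g) :
    memV fun t => ∫ s in Set.Ioi t, (Phi d t s).mulVec (g s) := by
  refine ⟨?_, _, fun t ht => hg.norm_integral_le ht⟩
  set a := A2 d / (2 * (d : ℝ)) with ha
  have hgi := continuousOn_pi.1 hg.1
  have hK : 0 ≤ K := (by positivity : 0 ≤ Real.exp (4 * 0) * ‖g 0‖).trans (hg.2 0 le_rfl)
  have hbound : ∀ s ≥ (0:ℝ), ‖Real.exp (2 * s) • ![a * g s 1, g s 1, g s 2, g s 3]‖ ≤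
      (1 + |a|) * K * Real.exp (-2 * s) := fun s hs => by
    have h1 : ‖![a * g s 1, g s 1, g s 2, g s 3]‖ ≤ (1 + |a|) * ‖g s‖ := by
      have hw : ∀ i, |g s i| ≤ ‖g s‖ := fun i => norm_le_pi_norm (g s) i
      have h2 : ∀ i, |g s i| ≤ (1 + |a|) * ‖g s‖ := fun i => by
        nlinarith [hw i, mul_nonneg (abs_nonneg a) (norm_nonneg (g s))]
      refine (pi_norm_le_iff_of_nonneg (by positivity)).2 fun i => ?_
      fin_cases i
      · have h3 : |a| * |g s 1| ≤ |a| * ‖g s‖ := by gcongr; exact hw 1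
        simp only [Fin.zero_eta, Matrix.cons_val_zero, Real.norm_eq_abs, abs_mul]
        nlinarith [norm_nonneg (g s)]
      all_goals simpa using h2 _
    rw [norm_smul, Real.norm_eq_abs, abs_of_pos (Real.exp_pos _)]
    have h : Real.exp (-2 * s) = Real.exp (2 * s) * Real.exp (-4 * s) := by
      rw [← Real.exp_add]; ring_nf
    calc _ ≤ Real.exp (2 * s) * ((1 + |a|) * (K * Real.exp (-4 * s))) := by
          refine mul_le_mul_of_nonneg_left (h1.trans ?_) (Real.exp_pos _).le
          gcongr
          exact hg.norm_le hs
      _ = _ := by rw [h]; ring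
  have hI2 : IntegrableOn (fun s => Real.exp (2 * s) • ![a * g s 1, g s 1, g s 2, g s 3])
      (Set.Ioi 0) := by
    refine integrableOn_of_exp_decay le_rfl (ContinuousOn.smul
    (s := Set.Ici 0) (f := fun s : ℝ => Real.exp (2 * s)) (by fun_prop) ?_) hbound
    refine continuousOn_pi.2 fun i => ?_
    fin_cases i <;> simp <;> fun_prop
  have hI1 : IntegrableOn (fun s => ![g s 0 - a * g s 1, 0, 0, 0]) (Set.Ioi 0) := by
    have h := (hg.integrableOn (d := d) le_rfl).sub hI2
    refine h.congr (Eventually.of_forall fun s => ?_)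
    simp only [Pi.sub_apply, Phi_mulVec, ← ha, mul_zero, Real.exp_zero, one_smul,
      add_sub_cancel_right]
  have hsub : ∀ t ∈ Set.Ici (0:ℝ), Set.Ioi t ⊆ Set.Ioi 0 := fun t ht => Set.Ioi_subset_Ioi ht
  refine ((continuousOn_integral_Ioi hI1).add ((by fun_prop :
    ContinuousOn (fun t : ℝ => Real.exp (-2 * t)) (Set.Ici 0)).smul
      (continuousOn_integral_Ioi hI2))).congr fun t ht => ?_
  have hadd := integral_add (hI1.mono_set (hsub t ht))
    ((hI2.mono_set (hsub t ht)).smul (Real.exp (-2 * t)))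
  simp only [Pi.smul_apply, integral_smul] at hadd
  simpa only [Phi_mulVec, ← ha, Pi.add_apply, Pi.smul_apply'] using hadd

end Integral

section Composition

variable {d : ℕ} {q : ℝ} {v h : ℝ → Fin 4 → ℝ}

lemma continuousOn_bfun_comp (hv : memV v) :
    ContinuousOn (fun s => bfun d q (v s)) (Set.Ici 0) :=
  (differentiable_bfun d q).continuous.comp_continuousOn hv.1

lemma continuousOn_fderiv_bfun_comp (hv : memV v) (hh : memV h) :
    ContinuousOn (fun s => fderiv ℝ (bfun d q) (v s) (h s)) (Set.Ici 0) :=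
  ((continuous_fderiv_bfun d q).comp_continuousOn hv.1).clm_apply hh.1

lemma exists_quadDecay_bfun (d : ℕ) (q : ℝ) (hv : memV v) :
    ∃ K, QuadDecay K fun s => bfun d q (v s) := by
  obtain ⟨K, hK, -, -, -, hb⟩ := exists_bfun_bounds d q (Vnorm v)
  refine ⟨K * (Vnorm v * Vnorm v), continuousOn_bfun_comp hv, fun s hs => ?_⟩
  calc _ ≤ Real.exp (4 * s) * (K * ‖v s‖ * ‖v s‖) := by gcongr; exact hb _ (hv.norm_le hs)
    _ = K * (Real.exp (4 * s) * (‖v s‖ * ‖v s‖)) := by ring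
    _ ≤ _ := mul_le_mul_of_nonneg_left (hv.exp_mul_norm_mul_norm_le hv hs) hK

lemma exists_quadDecay_fderiv_bfun (d : ℕ) (q : ℝ) (hv : memV v) :
    ∃ K, ∀ h, memV h → QuadDecay (K * Vnorm h) fun s => fderiv ℝ (bfun d q) (v s) (h s) := by
  obtain ⟨K, hK, -, hb, -, -⟩ := exists_bfun_bounds d q (Vnorm v)
  refine ⟨K * Vnorm v, fun h hh => ⟨continuousOn_fderiv_bfun_comp hv hh, fun s hs => ?_⟩⟩
  calc _ ≤ Real.exp (4 * s) * (K * ‖v s‖ * ‖h s‖) := by gcongr; exact hb _ _ (hv.norm_le hs)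
    _ = K * (Real.exp (4 * s) * (‖v s‖ * ‖h s‖)) := by ring
    _ ≤ K * (Vnorm v * Vnorm h) := mul_le_mul_of_nonneg_left (hv.exp_mul_norm_mul_norm_le hh hs) hK
    _ = _ := by ring

lemma Lop_eq (v h : ℝ → Fin 4 → ℝ) (t : ℝ) : Lop d q v h t =
    -∫ s in Set.Ioi t, (Phi d t s).mulVec (fderiv ℝ (bfun d q) (v s) (h s)) := by
  simp only [Lop, Db_mulVec]

lemma integrableOn_fderiv_bfun (hv : memV v) (hh : memV h) {t : ℝ} (ht : 0 ≤ t) :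
    IntegrableOn (fun s => (Phi d t s).mulVec (fderiv ℝ (bfun d q) (v s) (h s))) (Set.Ioi t) :=
  let ⟨_, hK⟩ := exists_quadDecay_fderiv_bfun d q hv
  (hK h hh).integrableOn ht

lemma integrableOn_bfun (hv : memV v) {t : ℝ} (ht : 0 ≤ t) :
    IntegrableOn (fun s => (Phi d t s).mulVec (bfun d q (v s))) (Set.Ioi t) :=
  let ⟨_, hK⟩ := exists_quadDecay_bfun d q hv
  hK.integrableOn ht

lemma memV_Lop (hv : memV v) (hh : memV h) : memV (Lop d q v h) := by
  obtain ⟨K, hK⟩ := exists_quadDecay_fderiv_bfun d q hv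
  have h1 := (hK h hh).memV_integral (d := d) |>.smul (-1)
  convert h1 using 1
  ext1 t
  simp [Lop_eq]

lemma exists_Lop_bound (d : ℕ) (q : ℝ) (hv : memV v) : ∃ K : ℝ, ∀ h, memV h → ∀ t ≥ (0:ℝ),
    Real.exp (2 * t) * ‖Lop d q v h t‖ ≤ K * Vnorm h := by
  obtain ⟨K, hK⟩ := exists_quadDecay_fderiv_bfun d q hv
  refine ⟨(1 + |A2 d / (2 * d)|) * K, fun h hh t ht => ?_⟩
  rw [Lop_eq, norm_neg, mul_assoc]
  exact (hK h hh).norm_integral_le ht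

lemma Lop_add (hv : memV v) {h₁ h₂ : ℝ → Fin 4 → ℝ} (hh₁ : memV h₁) (hh₂ : memV h₂) {t : ℝ}
    (ht : 0 ≤ t) : Lop d q v (h₁ + h₂) t = Lop d q v h₁ t + Lop d q v h₂ t := by
  simp only [Lop_eq, Pi.add_apply, map_add, Matrix.mulVec_add]
  rw [integral_add (integrableOn_fderiv_bfun hv hh₁ ht) (integrableOn_fderiv_bfun hv hh₂ ht),
    neg_add]

lemma Lop_smul (c : ℝ) (v h : ℝ → Fin 4 → ℝ) (t : ℝ) :
    Lop d q v (c • h) t = c • Lop d q v h t := by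
  simp only [Lop_eq, Pi.smul_apply, map_smul, Matrix.mulVec_smul]
  rw [integral_smul, smul_neg]

/-- The Taylor remainder of `Tmap` is quadratic, uniformly for increments of norm at most one. -/
lemma exists_Tmap_remainder_bound (d : ℕ) (q : ℝ) (u : ℝ → Fin 4 → ℝ) (hv : memV v) :
    ∃ K : ℝ, 0 ≤ K ∧ ∀ h, memV h → Vnorm h ≤ 1 → ∀ t ≥ (0:ℝ),
      Real.exp (2 * t) * ‖Tmap d q u (v + h) t - Tmap d q u v t - Lop d q v h t‖ ≤
        K * Vnorm h * Vnorm h := by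
  obtain ⟨K, hK, -, -, hb, -⟩ := exists_bfun_bounds d q (Vnorm v + 1)
  refine ⟨(1 + |A2 d / (2 * d)|) * K, by positivity, fun h hh hh1 t ht => ?_⟩
  have hvh := hv.add hh
  have hdecay : QuadDecay (K * (Vnorm h * Vnorm h)) fun s =>
      bfun d q ((v + h) s) - bfun d q (v s) - fderiv ℝ (bfun d q) (v s) (h s) := by
    refine ⟨((continuousOn_bfun_comp hvh).sub (continuousOn_bfun_comp hv)).sub
      (continuousOn_fderiv_bfun_comp hv hh), fun s hs => ?_⟩
    have h1 := hv.norm_le hs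
    have h2 := hh.norm_le hs
    calc _ ≤ Real.exp (4 * s) * (K * ‖h s‖ * ‖h s‖) := by
          gcongr
          exact hb _ _ (by linarith) ((norm_add_le _ _).trans (by linarith))
      _ = K * (Real.exp (4 * s) * (‖h s‖ * ‖h s‖)) := by ring
      _ ≤ _ := mul_le_mul_of_nonneg_left (hh.exp_mul_norm_mul_norm_le hh hs) hK
  have heq : Tmap d q u (v + h) t - Tmap d q u v t - Lop d q v h t =
      -∫ s in Set.Ioi t, (Phi d t s).mulVec
        (bfun d q ((v + h) s) - bfun d q (v s) - fderiv ℝ (bfun d q) (v s) (h s)) := by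
    simp only [Matrix.mulVec_sub]
    have h1 := integral_sub ((integrableOn_bfun (d := d) (q := q) hvh ht).sub
      (integrableOn_bfun (d := d) (q := q) hv ht)) (integrableOn_fderiv_bfun (d := d) (q := q) hv hh ht)
    simp only [Pi.sub_apply] at h1
    rw [h1, integral_sub (integrableOn_bfun hvh ht) (integrableOn_bfun hv ht), Lop_eq]
    simp only [Tmap]
    abel
  rw [heq, norm_neg]
  exact (hdecay.norm_integral_le ht).trans (by ring_nf; rfl)

/-- `Lop` is Lipschitz in its base point, uniformly within distance one of `v`. -/
lemma exists_Lop_sub_bound (d : ℕ) (q : ℝ) (hv : memV v) :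
    ∃ K : ℝ, 0 ≤ K ∧ ∀ v', memV v' → Vnorm (v' - v) ≤ 1 → ∀ h, memV h → ∀ t ≥ (0:ℝ),
      Real.exp (2 * t) * ‖Lop d q v' h t - Lop d q v h t‖ ≤ K * Vnorm (v' - v) * Vnorm h := by
  obtain ⟨K, hK, hb, -, -, -⟩ := exists_bfun_bounds d q (Vnorm v + 1)
  refine ⟨(1 + |A2 d / (2 * d)|) * K, by positivity, fun v' hv' hvv h hh t ht => ?_⟩
  have hsub := hv'.sub hv
  have hdecay : QuadDecay (K * (Vnorm (v' - v) * Vnorm h)) fun s =>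
      fderiv ℝ (bfun d q) (v' s) (h s) - fderiv ℝ (bfun d q) (v s) (h s) := by
    refine ⟨(continuousOn_fderiv_bfun_comp hv' hh).sub
      (continuousOn_fderiv_bfun_comp hv hh), fun s hs => ?_⟩
    have h1 := hv.norm_le hs
    have h2 : ‖v' s - v s‖ ≤ 1 := (hsub.norm_le hs).trans hvv
    have h3 : ‖v' s‖ ≤ Vnorm v + 1 := by
      have := norm_sub_norm_le (v' s) (v s); linarith
    calc _ ≤ Real.exp (4 * s) * (K * ‖v' s - v s‖ * ‖h s‖) := by
          gcongr
          exact hb _ _ _ (by linarith) h3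
      _ = K * (Real.exp (4 * s) * (‖(v' - v) s‖ * ‖h s‖)) := by rw [Pi.sub_apply]; ring
      _ ≤ _ := mul_le_mul_of_nonneg_left (hsub.exp_mul_norm_mul_norm_le hh hs) hK
  have heq : Lop d q v' h t - Lop d q v h t =
      -∫ s in Set.Ioi t, (Phi d t s).mulVec
        (fderiv ℝ (bfun d q) (v' s) (h s) - fderiv ℝ (bfun d q) (v s) (h s)) := by
    simp only [Matrix.mulVec_sub]
    rw [integral_sub (integrableOn_fderiv_bfun hv' hh ht) (integrableOn_fderiv_bfun hv hh ht),
      Lop_eq, Lop_eq]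
    abel
  rw [heq, norm_neg]
  exact (hdecay.norm_integral_le ht).trans (by ring_nf; rfl)

/-- A radius below which a linear factor `K * x` is dominated by `ε`. -/
lemma exists_radius_mul_le {K ε : ℝ} (hK : 0 ≤ K) (hε : 0 < ε) :
    ∃ δ > (0:ℝ), δ ≤ 1 ∧ ∀ x ≤ δ, K * x ≤ ε := by
  refine ⟨min 1 (ε / (K + 1)), by positivity, min_le_left _ _, fun x hx => ?_⟩
  have h1 : x ≤ ε / (K + 1) := hx.trans (min_le_right _ _)
  calc K * x ≤ K * (ε / (K + 1)) := by gcongr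
    _ ≤ (K + 1) * (ε / (K + 1)) := by gcongr; linarith
    _ = ε := by field_simp

end Composition

/-- If `r` and `0 < |u₀| < r` are small enough that `T_u` maps `B̄_r(u)` into itself, then
`T_u` is continuously Fréchet differentiable on the open ball `B_r(u)`, with derivative at
`v` the bounded linear operator `h ↦ (t ↦ −∫_t^∞ Φ(t,s)·Db(v(s))·h(s) ds)` on `𝕍`. -/
theorem stmt8 (d : ℕ) (hd : 2 ≤ d) (q : ℝ) (y0 z0 w0 r : ℝ) (hr : 0 < r)
    (hu0 : 0 < ‖uZero d y0 z0 w0‖) (hu0r : ‖uZero d y0 z0 w0‖ < r)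
    (hmap : ∀ v, inBall r (ufun d y0 z0 w0) v →
      inBall r (ufun d y0 z0 w0) (Tmap d q (ufun d y0 z0 w0) v)) :
    ∀ v, memV v → Vnorm (v - ufun d y0 z0 w0) < r →
      -- `Lop v` maps `𝕍` into `𝕍` and is a linear operator
      (∀ h, memV h → memV (Lop d q v h)) ∧
      (∀ h1 h2, memV h1 → memV h2 →
        ∀ t ≥ (0:ℝ), Lop d q v (h1 + h2) t = Lop d q v h1 t + Lop d q v h2 t) ∧
      (∀ (c : ℝ) (h), memV h →
        ∀ t ≥ (0:ℝ), Lop d q v (c • h) t = c • Lop d q v h t) ∧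
      -- `Lop v` is bounded
      (∃ K : ℝ, ∀ h, memV h →
        ∀ t ≥ (0:ℝ), Real.exp (2*t) * ‖Lop d q v h t‖ ≤ K * Vnorm h) ∧
      -- `Lop v` is the Fréchet derivative of `T_u` at `v`
      (∀ ε > (0:ℝ), ∃ δ > (0:ℝ), ∀ h, memV h → Vnorm h ≤ δ →
        ∀ t ≥ (0:ℝ),
          Real.exp (2*t) * ‖Tmap d q (ufun d y0 z0 w0) (v + h) t
            - Tmap d q (ufun d y0 z0 w0) v t - Lop d q v h t‖ ≤ ε * Vnorm h) ∧
      -- the derivative depends continuously (in operator norm) on `v ∈ B_r(u)`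
      (∀ ε > (0:ℝ), ∃ δ > (0:ℝ), ∀ v', memV v' → Vnorm (v' - ufun d y0 z0 w0) < r →
        Vnorm (v' - v) ≤ δ → ∀ h, memV h →
          ∀ t ≥ (0:ℝ),
            Real.exp (2*t) * ‖Lop d q v' h t - Lop d q v h t‖ ≤ ε * Vnorm h) := by
  intro v hv _
  refine ⟨fun h hh => memV_Lop hv hh, fun h₁ h₂ hh₁ hh₂ t ht => Lop_add hv hh₁ hh₂ ht,
    fun c h _ t _ => Lop_smul c v h t, exists_Lop_bound d q hv, fun ε hε => ?_, fun ε hε => ?_⟩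
  · obtain ⟨K, hK, hb⟩ := exists_Tmap_remainder_bound d q (ufun d y0 z0 w0) hv
    obtain ⟨δ, hδ, hδ1, hle⟩ := exists_radius_mul_le hK hε
    exact ⟨δ, hδ, fun h hh hhδ t ht => (hb h hh (hhδ.trans hδ1) t ht).trans
      (mul_le_mul_of_nonneg_right (hle _ hhδ) (Vnorm_nonneg h))⟩
  · obtain ⟨K, hK, hb⟩ := exists_Lop_sub_bound d q hv
    obtain ⟨δ, hδ, hδ1, hle⟩ := exists_radius_mul_le hK hε
    exact ⟨δ, hδ, fun v' hv' _ hvδ h hh t ht => (hb v' hv' (hvδ.trans hδ1) h hh t ht).trans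
      (mul_le_mul_of_nonneg_right (hle _ hvδ) (Vnorm_nonneg h))⟩
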